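/- For two d×d separable states and SIC-POVMs 𝐄_A, 𝐄_B on each factor, Σ_μ F(ρ, (E_A)_μ ⊗ 𝟙 + 𝟙 ⊗ (E_B)_μ) ≤ 2(d−1)/(d(d+1)). -/

import Mathlib

open Matrix BigOperators Kronecker

/-- Quantum Fisher information of an observable `A` with respect to a state
given by spectral data: eigenvalues `lam` and orthonormal eigenvectors `v`. -/
noncomputable def qfi {n : Type*} [Fintype n] (lam : n → ℝ) (v : n → n → ℂ)
    (A : Matrix n n ℂ) : ℝ :=
  ∑ k, ∑ l, (lam k - lam l) ^ 2 / (2 * (lam k + lam l)) *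
    ‖star (v k) ⬝ᵥ (A *ᵥ v l)‖ ^ 2

lemma dot_self_sum {n : Type*} [Fintype n] (x : n → ℂ) :
    star x ⬝ᵥ x = ((∑ k, ‖x k‖ ^ 2 : ℝ) : ℂ) := by
  simp only [dotProduct, Pi.star_apply, Complex.ofReal_sum]
  refine Finset.sum_congr rfl fun k _ => ?_
  rw [Complex.star_def, Complex.conj_mul']
  push_cast
  rfl

lemma dot_conj {n : Type*} [Fintype n] (x y : n → ℂ) :
    star (star x ⬝ᵥ y) = star y ⬝ᵥ x := by
  rw [← star_dotProduct_star, star_star]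

lemma dot_mul_conj {n : Type*} [Fintype n] (x y : n → ℂ) :
    (star x ⬝ᵥ y) * (star y ⬝ᵥ x) = ((‖star x ⬝ᵥ y‖ ^ 2 : ℝ) : ℂ) := by
  rw [← dot_conj x y, Complex.star_def, Complex.mul_conj']
  push_cast
  rfl

lemma norm_dot_comm {n : Type*} [Fintype n] (x y : n → ℂ) :
    ‖star x ⬝ᵥ y‖ = ‖star y ⬝ᵥ x‖ := by
  rw [← dot_conj x y, norm_star]

lemma quad_rank_one {n : Type*} [Fintype n] (x y b : n → ℂ) :
    star x ⬝ᵥ (vecMulVec b (star b) *ᵥ y) = (star x ⬝ᵥ b) * (star b ⬝ᵥ y) := by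
  rw [vecMulVec_mulVec, dotProduct_smul]
  simp

/-- Parseval for an ensemble whose average is diagonal. -/
lemma parseval_ensemble {n J : Type*} [Fintype n] [DecidableEq n] [Fintype J]
    (lam : n → ℝ) (q : J → ℝ) (c : J → n → ℂ)
    (hc : ∀ k l, ∑ j, (q j : ℂ) * (c j k * star (c j l)) = if k = l then (lam k : ℂ) else 0)
    (X : Matrix n n ℂ) :
    ∑ j, q j * ∑ k, ‖(X *ᵥ c j) k‖ ^ 2 = ∑ k, ∑ l, lam l * ‖X k l‖ ^ 2 := by
  apply Complex.ofReal_injective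
  push_cast
  have h1 : ∀ j k, ((‖(X *ᵥ c j) k‖ : ℂ)) ^ 2
      = ∑ l, ∑ m, X k l * star (X k m) * (c j l * star (c j m)) := by
    intro j k
    rw [← Complex.mul_conj']
    simp only [mulVec, dotProduct, map_sum, Finset.sum_mul_sum, map_mul]
    refine Finset.sum_congr rfl fun l _ => Finset.sum_congr rfl fun m _ => ?_
    simp only [Complex.star_def]
    ring
  simp only [h1, Finset.mul_sum]
  rw [Finset.sum_comm]
  refine Finset.sum_congr rfl fun k _ => ?_
  rw [Finset.sum_comm]
  refine Finset.sum_congr rfl fun l _ => ?_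
  rw [Finset.sum_comm]
  have h2 : ∀ m, ∑ j, (q j : ℂ) * (X k l * star (X k m) * (c j l * star (c j m)))
      = X k l * star (X k m) * (if l = m then (lam l : ℂ) else 0) := by
    intro m
    rw [← hc, Finset.mul_sum]
    refine Finset.sum_congr rfl fun j _ => ?_
    ring
  simp only [h2]
  simp only [mul_ite, mul_zero, Finset.sum_ite_eq, Finset.mem_univ, if_true]
  rw [Complex.star_def, Complex.mul_conj']
  ring

lemma cauchy_re {n : Type*} [Fintype n] (x y : n → ℂ) :
    (star x ⬝ᵥ y).re ^ 2 ≤ (∑ k, ‖x k‖ ^ 2) * ∑ k, ‖y k‖ ^ 2 := by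
  have h1 : |(star x ⬝ᵥ y).re| ≤ ∑ k, ‖x k‖ * ‖y k‖ := by
    refine (Complex.abs_re_le_norm _).trans ?_
    refine (norm_sum_le _ _).trans (le_of_eq ?_)
    refine Finset.sum_congr rfl fun k _ => ?_
    simp
  calc (star x ⬝ᵥ y).re ^ 2 = |(star x ⬝ᵥ y).re| ^ 2 := (sq_abs _).symm
    _ ≤ (∑ k, ‖x k‖ * ‖y k‖) ^ 2 := by gcongr
    _ ≤ _ := Finset.sum_mul_sq_le_sq_mul_sq _ _ _

lemma qfi_core {n J : Type*} [Fintype n] [DecidableEq n] [Fintype J]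
    (lam : n → ℝ) (hpos : ∀ k, 0 < lam k) (q : J → ℝ) (hq : ∀ j, 0 ≤ q j) (c : J → n → ℂ)
    (hc : ∀ k l, ∑ j, (q j : ℂ) * (c j k * star (c j l)) = if k = l then (lam k : ℂ) else 0)
    (hc1 : ∀ j, ∑ k, ‖c j k‖ ^ 2 = 1)
    (A : Matrix n n ℂ) (hA : A.IsHermitian) :
    ∑ k, ∑ l, (lam k - lam l) ^ 2 / (2 * (lam k + lam l)) * ‖A k l‖ ^ 2
      ≤ ∑ j, q j * (∑ k, ‖(A *ᵥ c j) k‖ ^ 2 - (star (c j) ⬝ᵥ (A *ᵥ c j)).re ^ 2) := by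
  set X : Matrix n n ℂ := Matrix.of fun k l => ((2 * lam k / (lam k + lam l) : ℝ) : ℂ) * A k l
    with hX
  have hXA : X + Xᴴ = A + A := by
    ext k l
    have hs : (lam k + lam l) ≠ 0 := (add_pos (hpos k) (hpos l)).ne'
    have hs' : (lam l + lam k) ≠ 0 := (add_pos (hpos l) (hpos k)).ne'
    have h1 : star (A l k) = A k l := hA.apply k l
    simp only [hX, Matrix.add_apply, Matrix.of_apply, conjTranspose_apply, star_mul, h1,
      Complex.star_def, Complex.conj_ofReal]
    have h2 : ((2 * lam k / (lam k + lam l) : ℝ) : ℂ) + ((2 * lam l / (lam l + lam k) : ℝ) : ℂ)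
        = 2 := by
      rw [← Complex.ofReal_add]
      have : 2 * lam k / (lam k + lam l) + 2 * lam l / (lam l + lam k) = 2 := by
        field_simp
        ring
      rw [this]; norm_num
    linear_combination (A k l) * h2
  have hre : ∀ x : n → ℂ, (star x ⬝ᵥ (A *ᵥ x)).re = (star x ⬝ᵥ (X *ᵥ x)).re := by
    intro x
    have h1 : star x ⬝ᵥ (Xᴴ *ᵥ x) = star (star x ⬝ᵥ (X *ᵥ x)) := by
      rw [dot_conj, star_mulVec, dotProduct_mulVec]
    have h2 : star x ⬝ᵥ ((X + Xᴴ) *ᵥ x) = star x ⬝ᵥ ((A + A) *ᵥ x) := by rw [hXA]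
    rw [add_mulVec, add_mulVec, dotProduct_add, dotProduct_add, h1] at h2
    have h3 := congrArg Complex.re h2
    simp only [Complex.add_re, Complex.star_def, Complex.conj_re] at h3
    linarith
  have hsw : ∀ k l, ‖A l k‖ = ‖A k l‖ := by
    intro k l
    rw [← hA.apply k l, norm_star]
  have hlow : ∑ k, ∑ l, lam l * ‖A k l‖ ^ 2 - ∑ k, ∑ l, lam l * ‖X k l‖ ^ 2
      ≤ ∑ j, q j * (∑ k, ‖(A *ᵥ c j) k‖ ^ 2 - (star (c j) ⬝ᵥ (A *ᵥ c j)).re ^ 2) := by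
    rw [← parseval_ensemble lam q c hc A, ← parseval_ensemble lam q c hc X,
      ← Finset.sum_sub_distrib]
    refine Finset.sum_le_sum fun j _ => ?_
    rw [← mul_sub]
    refine mul_le_mul_of_nonneg_left ?_ (hq j)
    have := cauchy_re (c j) (X *ᵥ c j)
    rw [hc1, one_mul] at this
    rw [hre]
    linarith
  refine le_trans (le_of_eq ?_) hlow
  have e1 : ∑ k, ∑ l, lam l * ‖A k l‖ ^ 2 - ∑ k, ∑ l, lam l * ‖X k l‖ ^ 2
      = ∑ k, ∑ l, (lam l - lam l * (2 * lam k / (lam k + lam l)) ^ 2) * ‖A k l‖ ^ 2 := by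
    simp only [← Finset.sum_sub_distrib]
    refine Finset.sum_congr rfl fun k _ => Finset.sum_congr rfl fun l _ => ?_
    simp only [hX, Matrix.of_apply, norm_mul, Complex.norm_real, mul_pow, Real.norm_eq_abs, sq_abs]
    ring
  have e2 : ∑ k, ∑ l, (lam l - lam l * (2 * lam k / (lam k + lam l)) ^ 2) * ‖A k l‖ ^ 2
      = ∑ k, ∑ l, (lam k - lam k * (2 * lam l / (lam k + lam l)) ^ 2) * ‖A k l‖ ^ 2 := by
    rw [Finset.sum_comm]
    refine Finset.sum_congr rfl fun k _ => Finset.sum_congr rfl fun l _ => ?_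
    rw [hsw k l, add_comm (lam l)]
  have e3 : ∑ k, ∑ l, (lam k - lam l) ^ 2 / (2 * (lam k + lam l)) * ‖A k l‖ ^ 2
      + ∑ k, ∑ l, (lam k - lam l) ^ 2 / (2 * (lam k + lam l)) * ‖A k l‖ ^ 2
      = ∑ k, ∑ l, (lam l - lam l * (2 * lam k / (lam k + lam l)) ^ 2) * ‖A k l‖ ^ 2
      + ∑ k, ∑ l, (lam k - lam k * (2 * lam l / (lam k + lam l)) ^ 2) * ‖A k l‖ ^ 2 := by
    simp only [← Finset.sum_add_distrib]
    refine Finset.sum_congr rfl fun k _ => Finset.sum_congr rfl fun l _ => ?_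
    have hs : (lam k + lam l) ≠ 0 := (add_pos (hpos k) (hpos l)).ne'
    rw [← add_mul, ← add_mul]
    congr 1
    field_simp
    ring
  rw [e1]
  linarith

lemma qfi_le_var {n J : Type*} [Fintype n] [DecidableEq n] [Fintype J]
    (lam : n → ℝ) (v : n → n → ℂ) (hpos : ∀ k, 0 < lam k)
    (hortho : ∀ k l, star (v k) ⬝ᵥ v l = if k = l then 1 else 0)
    (q : J → ℝ) (hq : ∀ j, 0 ≤ q j) (φ : J → n → ℂ) (hφ : ∀ j, star (φ j) ⬝ᵥ φ j = 1)
    (hdec : ∑ k, lam k • vecMulVec (v k) (star (v k))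
      = ∑ j, q j • vecMulVec (φ j) (star (φ j)))
    (A : Matrix n n ℂ) (hA : A.IsHermitian) :
    qfi lam v A ≤ ∑ j, q j * ((star (A *ᵥ φ j) ⬝ᵥ (A *ᵥ φ j)).re
      - (star (φ j) ⬝ᵥ (A *ᵥ φ j)).re ^ 2) := by
  set V : Matrix n n ℂ := Matrix.of fun i k => v k i with hV
  have hVV : Vᴴ * V = 1 := by
    ext k l
    rw [Matrix.one_apply, ← hortho k l]
    simp [hV, Matrix.mul_apply, dotProduct]
  have hVV' : V * Vᴴ = 1 := mul_eq_one_comm.mp hVV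
  have hcomp : ∀ (x : n → ℂ) k, (Vᴴ *ᵥ x) k = star (v k) ⬝ᵥ x := by
    intro x k
    simp [hV, mulVec, dotProduct]
  have hiso : ∀ x y : n → ℂ, star (Vᴴ *ᵥ x) ⬝ᵥ (Vᴴ *ᵥ y) = star x ⬝ᵥ y := by
    intro x y
    rw [star_mulVec, conjTranspose_conjTranspose, ← dotProduct_mulVec, mulVec_mulVec, hVV',
      one_mulVec]
  have hAc : ∀ x, (Vᴴ * A * V) *ᵥ (Vᴴ *ᵥ x) = Vᴴ *ᵥ (A *ᵥ x) := by
    intro x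
    rw [mulVec_mulVec, Matrix.mul_assoc, hVV', Matrix.mul_one, mulVec_mulVec]
  have hent : ∀ k l, (Vᴴ * A * V) k l = star (v k) ⬝ᵥ (A *ᵥ v l) := by
    intro k l
    rw [← hcomp, mulVec_mulVec]
    rw [Matrix.mul_apply]
    rfl
  have key := qfi_core lam hpos q hq (fun j => Vᴴ *ᵥ φ j) ?_ ?_ (Vᴴ * A * V) ?_
  · unfold qfi
    simp only [hent] at key
    refine key.trans (le_of_eq ?_)
    refine Finset.sum_congr rfl fun j _ => ?_
    rw [hAc, hiso]
    congr 2
    rw [← hiso (A *ᵥ φ j), dot_self_sum, Complex.ofReal_re]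
  · intro k l
    have h := congrArg (fun M : Matrix n n ℂ => star (v k) ⬝ᵥ (M *ᵥ v l)) hdec
    simp only [Matrix.sum_mulVec, dotProduct_sum, smul_mulVec, dotProduct_smul,
      quad_rank_one, hortho] at h
    simp only [hcomp, dot_conj]
    have h' : ∑ j, (q j : ℂ) * ((star (v k) ⬝ᵥ φ j) * (star (φ j) ⬝ᵥ v l))
      = ∑ j, q j • ((star (v k) ⬝ᵥ φ j) * (star (φ j) ⬝ᵥ v l)) := by
      simp [Complex.real_smul]
    rw [h', ← h]
    rcases eq_or_ne k l with rfl | hkl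
    · simp
    · simp [hkl]
  · intro j
    have := dot_self_sum (Vᴴ *ᵥ φ j)
    rw [hiso, hφ] at this
    exact_mod_cast this.symm
  · unfold Matrix.IsHermitian
    simp only [conjTranspose_mul, conjTranspose_conjTranspose, hA.eq, Matrix.mul_assoc]

lemma sic_self {d : ℕ} (x : Fin d → ℂ) (h : ‖star x ⬝ᵥ x‖ ^ 2 = 1) : star x ⬝ᵥ x = 1 := by
  rw [dot_self_sum] at h ⊢
  have h0 : 0 ≤ ∑ k, ‖x k‖ ^ 2 := Finset.sum_nonneg fun _ _ => sq_nonneg _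
  rw [Complex.norm_real, Real.norm_eq_abs, abs_of_nonneg h0] at h
  have : ∑ k, ‖x k‖ ^ 2 = 1 := by nlinarith
  rw [this]; simp

lemma trace_rank_one {n : Type*} [Fintype n] (b : n → ℂ) :
    (vecMulVec b (star b)).trace = star b ⬝ᵥ b := by
  rw [trace_vecMulVec, dotProduct_comm]

lemma sic_design {d : ℕ} (hd : 0 < d) (ψ : Fin (d ^ 2) → Fin d → ℂ)
    (hover : ∀ μ ν, ‖star (ψ μ) ⬝ᵥ ψ ν‖ ^ 2
      = ((d : ℝ) * (if μ = ν then 1 else 0) + 1) / (d + 1))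
    (a : Fin d → ℂ) (ha : star a ⬝ᵥ a = 1) :
    ∑ μ, ‖star (ψ μ) ⬝ᵥ a‖ ^ 2 = d ∧
      ∑ μ, (‖star (ψ μ) ⬝ᵥ a‖ ^ 2) ^ 2 = 2 * d / (d + 1) := by
  have hd0 : (d : ℂ) ≠ 0 := by exact_mod_cast hd.ne'
  have hd1 : (d : ℂ) + 1 ≠ 0 := by exact_mod_cast (Nat.succ_ne_zero d)
  have hself : ∀ μ, star (ψ μ) ⬝ᵥ ψ μ = 1 := by
    intro μ
    apply sic_self
    rw [hover, if_pos rfl]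
    have : (d : ℝ) + 1 ≠ 0 := by positivity
    field_simp
  set P : Fin (d ^ 2) → Matrix (Fin d) (Fin d) ℂ := fun μ => vecMulVec (ψ μ) (star (ψ μ)) with hP
  have hpair : ∀ (g : Fin (d ^ 2) → ℂ) ν, star (ψ ν) ⬝ᵥ ((∑ μ, g μ • P μ) *ᵥ ψ ν)
      = (d * g ν + ∑ μ, g μ) / (d + 1) := by
    intro g ν
    simp only [Matrix.sum_mulVec, dotProduct_sum, smul_mulVec, dotProduct_smul, hP,
      quad_rank_one, dot_mul_conj, hover, smul_eq_mul]
    have : ∀ μ, g μ * (((d * (if ν = μ then 1 else 0) + 1) / (d + 1) : ℝ) : ℂ)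
        = (d * (if ν = μ then g μ else 0) + g μ) / (d + 1) := by
      intro μ
      split_ifs <;> push_cast <;> ring
    simp only [this]
    rw [← Finset.sum_div, Finset.sum_add_distrib, ← Finset.mul_sum]
    simp
  have htr : ∀ g : Fin (d ^ 2) → ℂ, (∑ μ, g μ • P μ).trace = ∑ μ, g μ := by
    intro g
    simp only [Matrix.trace_sum, Matrix.trace_smul, hP, trace_rank_one, hself, smul_eq_mul, mul_one]
  have hli : LinearIndependent ℂ P := by
    rw [Fintype.linearIndependent_iff]
    intro g hg ν
    have h1 := hpair g ν
    have h2 := htr g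
    rw [hg] at h1 h2
    rw [← h2] at h1
    rw [zero_mulVec, dotProduct_zero, trace_zero, add_zero, eq_comm, div_eq_zero_iff] at h1
    exact (mul_eq_zero.mp (h1.resolve_right hd1)).resolve_left hd0
  have hspan : Submodule.span ℂ (Set.range P) = ⊤ := by
    apply hli.span_eq_top_of_card_eq_finrank'
    simp [Module.finrank_matrix, sq]
  have hmem : vecMulVec a (star a) ∈ Submodule.span ℂ (Set.range P) := by
    rw [hspan]; trivial
  obtain ⟨g, hg⟩ := (Submodule.mem_span_range_iff_exists_fun ℂ).mp hmem
  have hg1 : ∑ μ, g μ = 1 := by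
    rw [← htr, hg, trace_rank_one, ha]
  set x : Fin (d ^ 2) → ℝ := fun μ => ‖star (ψ μ) ⬝ᵥ a‖ ^ 2 with hx
  have hxg : ∀ ν, (x ν : ℂ) = (d * g ν + 1) / (d + 1) := by
    intro ν
    have h := hpair g ν
    rw [hg1, hg, quad_rank_one, dot_mul_conj] at h
    exact h
  have hgx : ∑ μ, g μ * (x μ : ℂ) = 1 := by
    have h := congrArg (fun M : Matrix (Fin d) (Fin d) ℂ => star a ⬝ᵥ (M *ᵥ a)) hg
    simp only [Matrix.sum_mulVec, dotProduct_sum, smul_mulVec, dotProduct_smul, hP,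
      quad_rank_one, ha, smul_eq_mul, mul_one] at h
    rw [← h]
    refine Finset.sum_congr rfl fun μ _ => ?_
    rw [dot_mul_conj, norm_dot_comm]
  have hs1 : ∑ μ, (x μ : ℂ) = d := by
    simp only [hxg]
    rw [← Finset.sum_div, Finset.sum_add_distrib, ← Finset.mul_sum, hg1]
    simp
    field_simp
    ring
  have hs2 : ∑ μ, (x μ : ℂ) ^ 2 = 2 * d / (d + 1) := by
    have : ∀ μ, (x μ : ℂ) ^ 2 = (d / (d + 1)) * (g μ * (x μ : ℂ)) + (1 / (d + 1)) * (x μ : ℂ) := by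
      intro μ
      rw [sq]
      nth_rewrite 1 [hxg μ]
      ring
    rw [Finset.sum_congr rfl fun μ _ => this μ, Finset.sum_add_distrib, ← Finset.mul_sum,
      ← Finset.mul_sum, hgx, hs1]
    ring
  constructor
  · exact_mod_cast hs1
  · apply Complex.ofReal_injective
    push_cast
    exact_mod_cast hs2

/-- Product vector. -/
def pvec {m n : Type*} (a : m → ℂ) (b : n → ℂ) : m × n → ℂ := fun i => a i.1 * b i.2

lemma pvec_dot {m n : Type*} [Fintype m] [Fintype n] (a a' : m → ℂ) (b b' : n → ℂ) :
    star (pvec a b) ⬝ᵥ pvec a' b' = (star a ⬝ᵥ a') * (star b ⬝ᵥ b') := by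
  simp only [dotProduct, Finset.sum_mul_sum, Fintype.sum_prod_type, pvec, Pi.star_apply, star_mul']
  refine Finset.sum_congr rfl fun i _ => Finset.sum_congr rfl fun j _ => ?_
  ring

lemma kron_pvec {m n : Type*} [Fintype m] [Fintype n] (M : Matrix m m ℂ) (N : Matrix n n ℂ)
    (a : m → ℂ) (b : n → ℂ) : (M ⊗ₖ N) *ᵥ pvec a b = pvec (M *ᵥ a) (N *ᵥ b) := by
  ext i
  simp only [mulVec, dotProduct, Finset.sum_mul_sum, Fintype.sum_prod_type, pvec,
    kroneckerMap_apply]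
  refine Finset.sum_congr rfl fun i _ => Finset.sum_congr rfl fun j _ => ?_
  ring

lemma vecMulVec_pvec {m n : Type*} (a : m → ℂ) (b : n → ℂ) :
    vecMulVec (pvec a b) (star (pvec a b))
      = vecMulVec a (star a) ⊗ₖ vecMulVec b (star b) := by
  ext i j
  simp only [vecMulVec_apply, kroneckerMap_apply, pvec, Pi.star_apply, star_mul']
  ring

open ComplexOrder in
lemma state_decomp {d : ℕ} (ρ : Matrix (Fin d) (Fin d) ℂ) (h : ρ.PosSemidef)
    (htr : ρ.trace = 1) : ∃ (w : Fin d → ℝ) (a : Fin d → Fin d → ℂ), (∀ i, 0 ≤ w i) ∧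
      ∑ i, w i = 1 ∧ (∀ i, star (a i) ⬝ᵥ a i = 1) ∧
      ρ = ∑ i, w i • vecMulVec (a i) (star (a i)) := by
  refine ⟨h.1.eigenvalues, fun i => (h.1.eigenvectorBasis i : EuclideanSpace ℂ (Fin d)).ofLp,
    h.eigenvalues_nonneg, ?_, ?_, ?_⟩
  · have := h.1.trace_eq_sum_eigenvalues
    rw [htr] at this
    apply Complex.ofReal_injective
    rw [Complex.ofReal_sum, Complex.ofReal_one]
    exact this.symm
  · intro i
    have h1 := h.1.eigenvectorBasis.orthonormal.1 i
    have h2 := EuclideanSpace.norm_sq_eq (h.1.eigenvectorBasis i)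
    rw [dot_self_sum, ← h2, h1]
    simp
  · have h1 := h.1.spectral_theorem
    conv_lhs => rw [h1]
    ext i j
    simp [Unitary.conjStarAlgAut_apply, Matrix.mul_apply, Matrix.sum_apply, vecMulVec_apply,
      Matrix.diagonal_apply, Matrix.star_apply, Matrix.IsHermitian.eigenvectorUnitary_apply]
    refine Finset.sum_congr rfl fun k _ => ?_
    ring

/-- Local variance for product vectors. -/
lemma var_product {d : ℕ} (ψ χ a b : Fin d → ℂ)
    (hψ : star ψ ⬝ᵥ ψ = 1) (hχ : star χ ⬝ᵥ χ = 1)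
    (ha : star a ⬝ᵥ a = 1) (hb : star b ⬝ᵥ b = 1)
    (M : Matrix (Fin d × Fin d) (Fin d × Fin d) ℂ)
    (hM : M = (((d : ℂ))⁻¹ • vecMulVec ψ (star ψ)) ⊗ₖ (1 : Matrix (Fin d) (Fin d) ℂ)
      + (1 : Matrix (Fin d) (Fin d) ℂ) ⊗ₖ (((d : ℂ))⁻¹ • vecMulVec χ (star χ))) :
    (star (M *ᵥ pvec a b) ⬝ᵥ (M *ᵥ pvec a b)).re - (star (pvec a b) ⬝ᵥ (M *ᵥ pvec a b)).re ^ 2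
      = ((d : ℝ)⁻¹) ^ 2 * (‖star ψ ⬝ᵥ a‖ ^ 2 - (‖star ψ ⬝ᵥ a‖ ^ 2) ^ 2
        + ‖star χ ⬝ᵥ b‖ ^ 2 - (‖star χ ⬝ᵥ b‖ ^ 2) ^ 2) := by
  set α := star ψ ⬝ᵥ a with hα
  set β := star χ ⬝ᵥ b with hβ
  have hα' : star a ⬝ᵥ ψ = star α := (dot_conj ψ a).symm
  have hβ' : star b ⬝ᵥ χ = star β := (dot_conj χ b).symm
  have h1 : M *ᵥ pvec a b = ((d : ℂ)⁻¹ * α) • pvec ψ b + ((d : ℂ)⁻¹ * β) • pvec a χ := by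
    rw [hM, add_mulVec, kron_pvec, kron_pvec]
    ext i
    simp only [smul_mulVec, vecMulVec_mulVec, one_mulVec, pvec, Pi.add_apply, Pi.smul_apply,
      smul_eq_mul, MulOpposite.smul_eq_mul_unop, MulOpposite.unop_op, ← hα, ← hβ]
    ring
  have hdc : star ((d : ℂ)⁻¹) = (d : ℂ)⁻¹ := by simp
  have hαα : α * star α = ((‖α‖ ^ 2 : ℝ) : ℂ) := by
    rw [Complex.star_def, Complex.mul_conj']; push_cast; rfl
  have hββ : β * star β = ((‖β‖ ^ 2 : ℝ) : ℂ) := by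
    rw [Complex.star_def, Complex.mul_conj']; push_cast; rfl
  have h2 : star (pvec a b) ⬝ᵥ (M *ᵥ pvec a b) = (((d : ℝ)⁻¹ * (‖α‖ ^ 2 + ‖β‖ ^ 2) : ℝ) : ℂ) := by
    rw [h1, dotProduct_add, dotProduct_smul, dotProduct_smul, pvec_dot, pvec_dot, ha, hb, hα', hβ']
    rw [Complex.ofReal_mul, Complex.ofReal_add, ← hαα, ← hββ]
    simp only [smul_eq_mul]
    push_cast
    ring
  have h3 : star (M *ᵥ pvec a b) ⬝ᵥ (M *ᵥ pvec a b)
      = ((((d : ℝ)⁻¹) ^ 2 * (‖α‖ ^ 2 + ‖β‖ ^ 2 + 2 * ‖α‖ ^ 2 * ‖β‖ ^ 2) : ℝ) : ℂ) := by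
    rw [h1, star_add, star_smul, star_smul]
    simp only [dotProduct_add, add_dotProduct, dotProduct_smul, smul_dotProduct, pvec_dot, ha, hb,
      hψ, hχ, hα', hβ', ← hα, ← hβ, smul_eq_mul, star_mul', hdc]
    have : ((((d : ℝ)⁻¹) ^ 2 * (‖α‖ ^ 2 + ‖β‖ ^ 2 + 2 * ‖α‖ ^ 2 * ‖β‖ ^ 2) : ℝ) : ℂ)
       = ((d : ℂ)⁻¹) ^ 2 * (α * star α + β * star β + 2 * (α * star α) * (β * star β)) := by
      rw [hαα, hββ]; push_cast; rfl
    rw [this]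
    ring
  rw [h2, h3, Complex.ofReal_re, Complex.ofReal_re]
  ring

lemma rank_one_herm {n : Type*} (b : n → ℂ) : (vecMulVec b (star b)).IsHermitian := by
  ext i j
  simp [vecMulVec_apply, conjTranspose_apply, mul_comm]


open ComplexOrder in
theorem total_qfi_sic_separable_bound {d K : ℕ} (hd : 0 < d)
    (p : Fin K → ℝ) (hp : ∀ k, 0 ≤ p k) (hp1 : ∑ k, p k = 1)
    (ρA ρB : Fin K → Matrix (Fin d) (Fin d) ℂ)
    (hρA : ∀ k, (ρA k).PosSemidef) (htrA : ∀ k, (ρA k).trace = 1)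
    (hρB : ∀ k, (ρB k).PosSemidef) (htrB : ∀ k, (ρB k).trace = 1)
    (ψA ψB : Fin (d ^ 2) → Fin d → ℂ)
    (hoverA : ∀ μ ν, ‖star (ψA μ) ⬝ᵥ ψA ν‖ ^ 2
      = ((d : ℝ) * (if μ = ν then 1 else 0) + 1) / (d + 1))
    (hoverB : ∀ μ ν, ‖star (ψB μ) ⬝ᵥ ψB ν‖ ^ 2
      = ((d : ℝ) * (if μ = ν then 1 else 0) + 1) / (d + 1))
    (EA EB : Fin (d ^ 2) → Matrix (Fin d) (Fin d) ℂ)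
    (hEA : ∀ μ, EA μ = ((d : ℂ))⁻¹ • vecMulVec (ψA μ) (star (ψA μ)))
    (hEB : ∀ μ, EB μ = ((d : ℂ))⁻¹ • vecMulVec (ψB μ) (star (ψB μ)))
    (lam : Fin d × Fin d → ℝ) (v : Fin d × Fin d → Fin d × Fin d → ℂ)
    (hpos : ∀ k, 0 < lam k)
    (hortho : ∀ k l, star (v k) ⬝ᵥ v l = if k = l then 1 else 0)
    (hsep : ∑ k, lam k • vecMulVec (v k) (star (v k)) = ∑ k, p k • (ρA k ⊗ₖ ρB k)) :
    ∑ μ, qfi lam v (EA μ ⊗ₖ (1 : Matrix (Fin d) (Fin d) ℂ)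
      + (1 : Matrix (Fin d) (Fin d) ℂ) ⊗ₖ EB μ) ≤ 2 * ((d : ℝ) - 1) / (d * (d + 1)) := by
  have hd1 : (d : ℝ) + 1 ≠ 0 := by positivity
  have hd0 : (d : ℝ) ≠ 0 := by positivity
  have hone : ((d : ℝ) * 1 + 1) / (d + 1) = 1 := by field_simp
  have hsA : ∀ μ, star (ψA μ) ⬝ᵥ ψA μ = 1 := fun μ =>
    sic_self _ (by rw [hoverA, if_pos rfl, hone])
  have hsB : ∀ μ, star (ψB μ) ⬝ᵥ ψB μ = 1 := fun μ =>
    sic_self _ (by rw [hoverB, if_pos rfl, hone])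
  choose wA a hwA hwA1 ha hA using fun k => state_decomp (ρA k) (hρA k) (htrA k)
  choose wB b hwB hwB1 hb hB using fun k => state_decomp (ρB k) (hρB k) (htrB k)
  set q : Fin K × Fin d × Fin d → ℝ := fun j => p j.1 * (wA j.1 j.2.1 * wB j.1 j.2.2) with hq
  set φ : Fin K × Fin d × Fin d → Fin d × Fin d → ℂ :=
    fun j => pvec (a j.1 j.2.1) (b j.1 j.2.2) with hφ
  have hq0 : ∀ j, 0 ≤ q j := fun j => mul_nonneg (hp _) (mul_nonneg (hwA _ _) (hwB _ _))
  have hq1 : ∑ j, q j = 1 := by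
    simp only [hq, Fintype.sum_prod_type, ← Finset.mul_sum, hwB1, mul_one, hwA1, hp1]
  have hφ1 : ∀ j, star (φ j) ⬝ᵥ φ j = 1 := by
    intro j
    simp only [hφ, pvec_dot, ha, hb, mul_one]
  have hdec : ∑ k, lam k • vecMulVec (v k) (star (v k))
      = ∑ j, q j • vecMulVec (φ j) (star (φ j)) := by
    rw [hsep]
    simp only [hq, hφ, Fintype.sum_prod_type, vecMulVec_pvec]
    refine Finset.sum_congr rfl fun k _ => ?_
    ext i j
    conv_lhs => rw [hA k, hB k]
    simp only [Matrix.smul_apply, kroneckerMap_apply, Matrix.sum_apply, Finset.sum_mul_sum,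
      Finset.smul_sum, Complex.real_smul]
    refine Finset.sum_congr rfl fun i _ => Finset.sum_congr rfl fun j _ => ?_
    push_cast
    ring
  have hherm : ∀ μ, (EA μ ⊗ₖ (1 : Matrix (Fin d) (Fin d) ℂ)
      + (1 : Matrix (Fin d) (Fin d) ℂ) ⊗ₖ EB μ).IsHermitian := by
    intro μ
    have h1 : (EA μ)ᴴ = EA μ := by
      rw [hEA, conjTranspose_smul, (rank_one_herm _).eq]; simp
    have h2 : (EB μ)ᴴ = EB μ := by
      rw [hEB, conjTranspose_smul, (rank_one_herm _).eq]; simp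
    unfold Matrix.IsHermitian
    rw [conjTranspose_add, conjTranspose_kronecker, conjTranspose_kronecker, h1, h2,
      conjTranspose_one]
  calc _ ≤ ∑ μ, ∑ j, q j * (((d : ℝ)⁻¹) ^ 2 *
        (‖star (ψA μ) ⬝ᵥ a j.1 j.2.1‖ ^ 2 - (‖star (ψA μ) ⬝ᵥ a j.1 j.2.1‖ ^ 2) ^ 2
        + ‖star (ψB μ) ⬝ᵥ b j.1 j.2.2‖ ^ 2 - (‖star (ψB μ) ⬝ᵥ b j.1 j.2.2‖ ^ 2) ^ 2)) := by
        refine Finset.sum_le_sum fun μ _ => ?_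
        refine (qfi_le_var lam v hpos hortho q hq0 φ hφ1 hdec _ (hherm μ)).trans (le_of_eq ?_)
        refine Finset.sum_congr rfl fun j _ => ?_
        rw [var_product (ψA μ) (ψB μ) (a j.1 j.2.1) (b j.1 j.2.2) (hsA μ) (hsB μ) (ha _ _)
          (hb _ _) _ (by rw [hEA, hEB])]
    _ = ∑ j, q j * (2 * ((d : ℝ) - 1) / (d * (d + 1))) := by
        rw [Finset.sum_comm]
        refine Finset.sum_congr rfl fun j _ => ?_
        rw [← Finset.mul_sum, ← Finset.mul_sum]
        obtain ⟨hA1, hA2⟩ := sic_design hd ψA hoverA _ (ha j.1 j.2.1)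
        obtain ⟨hB1, hB2⟩ := sic_design hd ψB hoverB _ (hb j.1 j.2.2)
        rw [Finset.sum_sub_distrib, Finset.sum_add_distrib, Finset.sum_sub_distrib,
          hA1, hA2, hB1, hB2]
        congr 1
        field_simp
        ring
    _ = _ := by rw [← Finset.sum_mul, hq1, one_mul]
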